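/- Let Y* ∈ ℝ^{p×r}_*, X* := Y*Y*ᵀ, κ* := σ_1(Y*)/σ_r(Y*), and let μ, α ≥ 0. Let Y ∈ ℝ^{p×r}_* satisfy d(Y,Y*) > μσ_r(Y*)/κ* and ‖2(YYᵀ − X*)Y‖_F ≤ α·μ·σ_r(Y*)³/(4κ*). Let Q ∈ O(r) be a minimizer of O ↦ ‖Y − Y*O‖_F over O(r) and set θ := Y − Y*Q. Then ‖Yθᵀ + θYᵀ‖²_F + 2⟨YYᵀ − X*, θθᵀ⟩ ≤ (α − 2(√2 − 1))·σ_r(Y*)²·‖θ‖²_F. In particular, if α < 2(√2 − 1), the lifted Riemannian Hessian of H at Y has at least one negative eigenvalue and θ is an escaping direction. -/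

import Mathlib

open Matrix

/-- Trace inner product `⟨A,B⟩ = tr(AᵀB)`. -/
noncomputable def trInner {m n : ℕ} (A B : Matrix (Fin m) (Fin n) ℝ) : ℝ :=
  ∑ i, ∑ j, A i j * B i j

/-- Frobenius norm. -/
noncomputable def frob {m n : ℕ} (A : Matrix (Fin m) (Fin n) ℝ) : ℝ :=
  Real.sqrt (∑ i, ∑ j, (A i j) ^ 2)

open scoped Classical in
/-- The `i`-th largest eigenvalue (1-indexed, `1 ≤ i ≤ n`) of a Hermitian matrix; junk value 0
otherwise. -/
noncomputable def eigVal {n : ℕ} (A : Matrix (Fin n) (Fin n) ℝ) (i : ℕ) : ℝ :=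
  if hA : A.IsHermitian then
    if h : n - i < n then hA.eigenvalues (Tuple.sort hA.eigenvalues ⟨n - i, h⟩) else 0
  else 0

/-- The `i`-th largest singular value (1-indexed) of `Y`, so `sval Y 1 = ‖Y‖` (spectral norm)
and `sval Y r` is the least singular value. -/
noncomputable def sval {p r : ℕ} (Y : Matrix (Fin p) (Fin r) ℝ) (i : ℕ) : ℝ :=
  Real.sqrt (eigVal (Yᵀ * Y) i)

/-- `Q` is an orthogonal matrix. -/
def IsOrtho {r : ℕ} (Q : Matrix (Fin r) (Fin r) ℝ) : Prop := Qᵀ * Q = 1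

/-- The quotient distance `d(Y₁,Y₂) = min_{Q ∈ O(r)} ‖Y₂Q − Y₁‖_F`. -/
noncomputable def dOrth {p r : ℕ} (Y₁ Y₂ : Matrix (Fin p) (Fin r) ℝ) : ℝ :=
  sInf {c | ∃ Q : Matrix (Fin r) (Fin r) ℝ, IsOrtho Q ∧ c = frob (Y₂ * Q - Y₁)}



lemma aux_frob_sq {m n : ℕ} (A : Matrix (Fin m) (Fin n) ℝ) :
    (frob A) ^ 2 = (Aᵀ * A).trace := by
  have h0 : 0 ≤ ∑ i, ∑ j, (A i j) ^ 2 :=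
    Finset.sum_nonneg fun i _ => Finset.sum_nonneg fun j _ => sq_nonneg _
  rw [frob, Real.sq_sqrt h0]
  simp only [Matrix.trace, Matrix.diag, Matrix.mul_apply, Matrix.transpose_apply]
  rw [Finset.sum_comm]
  simp only [sq]

lemma aux_trInner {m n : ℕ} (A B : Matrix (Fin m) (Fin n) ℝ) :
    trInner A B = (Aᵀ * B).trace := by
  unfold trInner
  simp only [Matrix.trace, Matrix.diag, Matrix.mul_apply, Matrix.transpose_apply]
  rw [Finset.sum_comm]

lemma aux_frob_nonneg {m n : ℕ} (A : Matrix (Fin m) (Fin n) ℝ) : 0 ≤ frob A :=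
  Real.sqrt_nonneg _

lemma aux_cs {m n : ℕ} (A B : Matrix (Fin m) (Fin n) ℝ) :
    (Aᵀ * B).trace ≤ frob A * frob B := by
  rw [← aux_trInner]
  unfold trInner frob
  simp only [← Finset.sum_product', ← Finset.univ_product_univ]
  exact Real.sum_mul_le_sqrt_mul_sqrt _ (fun x : Fin m × Fin n => A x.1 x.2) (fun x => B x.1 x.2)

lemma aux_cyc {m n k l : ℕ} (U : Matrix (Fin m) (Fin n) ℝ) (V : Matrix (Fin n) (Fin k) ℝ)
    (W : Matrix (Fin k) (Fin l) ℝ) (R : Matrix (Fin l) (Fin m) ℝ) :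
    (U * V * (W * R)).trace = ((R * U) * (V * W)).trace := by
  rw [← Matrix.mul_assoc, Matrix.trace_mul_comm]
  simp only [Matrix.mul_assoc]

lemma aux_sq_nonneg {n m : ℕ} (A : Matrix (Fin m) (Fin n) ℝ) : 0 ≤ (Aᵀ * A).trace := by
  rw [← aux_frob_sq]; positivity

/-- Procrustes: optimality gives symmetry and positive semidefiniteness. -/
lemma aux_procrustes {r : ℕ} (N : Matrix (Fin r) (Fin r) ℝ)
    (h : ∀ O : Matrix (Fin r) (Fin r) ℝ, IsOrtho O → (Oᵀ * N).trace ≤ N.trace) :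
    N.PosSemidef := by
  have hsym : Nᵀ = N := by
    ext i j
    by_cases hij : i = j
    · subst hij; rfl
    rw [Matrix.transpose_apply]
    set K : Matrix (Fin r) (Fin r) ℝ := Matrix.single i j 1 - Matrix.single j i 1 with hK
    have hji : j ≠ i := fun h => hij h.symm
    have hKt : Kᵀ = -K := by simp [hK]
    have hK2 : K * K = -(Matrix.single i i 1 + Matrix.single j j 1) := by
      simp [hK, Matrix.sub_mul, Matrix.mul_sub, hij, hji]
      abel
    have hK3 : K * (K * K) = -K := by
      rw [hK2]
      simp [hK, Matrix.sub_mul, Matrix.mul_add, hij, hji]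
      try abel
    set a := (K * N).trace
    set b := (K * K * N).trace
    have ha : a = N j i - N i j := by
      simp [a, hK, Matrix.sub_mul, Matrix.trace_sub, Matrix.trace_single_mul]
    have key : ∀ t : ℝ, t * a ≤ t ^ 2 * (-b) := by
      intro t
      have hp : 0 < 1 + t ^ 2 := by positivity
      have hO : IsOrtho (1 - (2 * t / (1 + t ^ 2)) • K + (2 * t ^ 2 / (1 + t ^ 2)) • (K * K)) := by
        unfold IsOrtho
        simp only [Matrix.transpose_add, Matrix.transpose_sub, Matrix.transpose_smul,
          Matrix.transpose_mul, Matrix.transpose_one, hKt, neg_mul_neg]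
        have h4 : K * K * (K * K) = - (K * K) := by
          rw [Matrix.mul_assoc, hK3, mul_neg]
        have h5 : K * K * K = -K := by rw [Matrix.mul_assoc, hK3]
        simp only [Matrix.add_mul, Matrix.sub_mul, Matrix.mul_add, Matrix.mul_sub, Matrix.smul_mul, Matrix.mul_smul, h4, hK3, h5,
          one_mul, mul_one, neg_mul, mul_neg, smul_neg, smul_smul]
        match_scalars <;> field_simp <;> ring
      have := h _ hO
      simp only [Matrix.transpose_add, Matrix.transpose_sub, Matrix.transpose_smul,
          Matrix.transpose_mul, Matrix.transpose_one, hKt, neg_mul_neg, smul_neg, sub_neg_eq_add,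
          Matrix.add_mul, Matrix.smul_mul, Matrix.trace_add, Matrix.trace_smul, one_mul, smul_eq_mul] at this
      change N.trace + (2 * t / (1 + t ^ 2)) * a + (2 * t ^ 2 / (1 + t ^ 2)) * b ≤ N.trace at this
      have h6 : (2 * t * a + 2 * t ^ 2 * b) / (1 + t ^ 2) ≤ 0 := by
        have : (2 * t * a + 2 * t ^ 2 * b) / (1 + t ^ 2)
          = (2 * t / (1 + t ^ 2)) * a + (2 * t ^ 2 / (1 + t ^ 2)) * b := by ring
        linarith
      rw [div_le_iff₀ hp] at h6
      linarith
    have hb : 0 ≤ -b := by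
      have := key 1
      have := key (-1)
      linarith
    have ha0 : a = 0 := by
      have h1 := key (a / (2 * (-b + 1)))
      have hp : 0 < -b + 1 := by linarith
      have e1 : a / (2 * (-b + 1)) * a = (a / (2 * (-b + 1))) ^ 2 * (2 * (-b + 1)) := by
        field_simp
      rw [e1] at h1
      have h2 : (a / (2 * (-b + 1))) ^ 2 * (-b + 2) ≤ 0 := by linarith
      have h3 : (a / (2 * (-b + 1))) ^ 2 ≤ 0 := by
        by_contra hc
        push Not at hc
        have := mul_pos hc (show 0 < -b + 2 by linarith)
        linarith
      have h4 : a / (2 * (-b + 1)) = 0 := by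
        exact pow_eq_zero_iff (two_ne_zero) |>.1 (le_antisymm h3 (sq_nonneg _))
      rcases div_eq_zero_iff.1 h4 with h | h
      · exact h
      · linarith
    linarith
  refine Matrix.PosSemidef.of_dotProduct_mulVec_nonneg ?_ ?_
  · unfold Matrix.IsHermitian
    rw [Matrix.conjTranspose_eq_transpose_of_trivial]; exact hsym
  intro v
  simp only [star_trivial]
  by_cases hv : v = 0
  · simp [hv]
  have hvv : 0 < v ⬝ᵥ v := by
    have := Matrix.dotProduct_star_self_pos_iff.2 hv
    simpa using this
  have hO : IsOrtho (1 - (2 / (v ⬝ᵥ v)) • Matrix.vecMulVec v v) := by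
    unfold IsOrtho
    simp only [Matrix.transpose_sub, Matrix.transpose_smul, Matrix.transpose_one,
      Matrix.transpose_vecMulVec]
    simp only [Matrix.sub_mul, Matrix.mul_sub, Matrix.smul_mul, Matrix.mul_smul, one_mul, mul_one,
      Matrix.vecMulVec_mul_vecMulVec, smul_smul, Matrix.vecMulVec_smul]
    match_scalars <;> field_simp <;> ring
  have h1 := h _ hO
  have h2 : (Matrix.vecMulVec v v * N).trace = v ⬝ᵥ (N *ᵥ v) := by
    rw [Matrix.trace_mul_comm, Matrix.mul_vecMulVec, Matrix.trace_vecMulVec, dotProduct_comm]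
  simp only [Matrix.transpose_sub, Matrix.transpose_smul, Matrix.transpose_one,
      Matrix.transpose_vecMulVec, Matrix.sub_mul, one_mul, Matrix.trace_sub, Matrix.smul_mul,
      Matrix.trace_smul, h2, smul_eq_mul] at h1
  have h3 : 0 ≤ 2 / (v ⬝ᵥ v) * (v ⬝ᵥ (N *ᵥ v)) := by linarith
  exact nonneg_of_mul_nonneg_right h3 (by positivity)

/-- least eigenvalue bound -/
lemma aux_eig {p r : ℕ} (Y : Matrix (Fin p) (Fin r) ℝ) :
    (Yᵀ * Y - ((sval Y r) ^ 2) • (1 : Matrix (Fin r) (Fin r) ℝ)).PosSemidef := by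
  rcases Nat.eq_zero_or_pos r with h0 | h0
  · subst h0
    rw [Subsingleton.elim (Yᵀ * Y - _) (0 : Matrix (Fin 0) (Fin 0) ℝ)]
    exact Matrix.PosSemidef.zero
  have hpsd : (Yᵀ * Y).PosSemidef := by
    simpa using Matrix.posSemidef_conjTranspose_mul_self Y
  have hA : (Yᵀ * Y).IsHermitian := hpsd.1
  have hlt : r - r < r := by omega
  have he : (sval Y r) ^ 2 = hA.eigenvalues (Tuple.sort hA.eigenvalues ⟨r - r, hlt⟩) := by
    unfold sval eigVal
    rw [dif_pos hA, dif_pos hlt, Real.sq_sqrt]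
    exact hpsd.eigenvalues_nonneg _
  have hmin : ∀ i, (sval Y r) ^ 2 ≤ hA.eigenvalues i := by
    intro i
    rw [he]
    obtain ⟨k, rfl⟩ := (Tuple.sort hA.eigenvalues).surjective i
    exact Tuple.monotone_sort hA.eigenvalues (show (⟨r - r, hlt⟩ : Fin r) ≤ k by
      rw [Fin.le_def]; simp)
  generalize (sval Y r) ^ 2 = c at *
  have hs := hA.spectral_theorem
  rw [Unitary.conjStarAlgAut_apply] at hs
  have : Yᵀ * Y - c • (1 : Matrix (Fin r) (Fin r) ℝ) =
      (hA.eigenvectorUnitary : Matrix (Fin r) (Fin r) ℝ) *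
      Matrix.diagonal (fun i => hA.eigenvalues i - c) *
      (hA.eigenvectorUnitary : Matrix (Fin r) (Fin r) ℝ)ᴴ := by
    have h1 : Matrix.diagonal (fun i => hA.eigenvalues i - c) =
      Matrix.diagonal (RCLike.ofReal ∘ hA.eigenvalues) - c • (1 : Matrix (Fin r) (Fin r) ℝ) := by
      ext i j
      by_cases hij : i = j
      · subst hij; simp
      · simp [hij]
    rw [h1, Matrix.mul_sub, Matrix.sub_mul]
    have h2 : (hA.eigenvectorUnitary : Matrix (Fin r) (Fin r) ℝ) *
      (hA.eigenvectorUnitary : Matrix (Fin r) (Fin r) ℝ)ᴴ = 1 := by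
      have := Unitary.coe_mul_star_self hA.eigenvectorUnitary
      exact this
    rw [Matrix.mul_smul, mul_one, Matrix.smul_mul, h2]
    congr 1
  rw [this]
  apply Matrix.PosSemidef.mul_mul_conjTranspose_same
  apply Matrix.PosSemidef.diagonal
  intro i
  simpa using hmin i

lemma aux_pos {p r : ℕ} (h0 : 0 < r) (Y : Matrix (Fin p) (Fin r) ℝ) (hY : Y.rank = r) :
    0 < sval Y r := by
  have hpsd : (Yᵀ * Y).PosSemidef := by
    simpa using Matrix.posSemidef_conjTranspose_mul_self Y
  have hA : (Yᵀ * Y).IsHermitian := hpsd.1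
  have hlt : r - r < r := by omega
  unfold sval eigVal
  rw [dif_pos hA, dif_pos hlt]
  apply Real.sqrt_pos.2
  refine lt_of_le_of_ne (hpsd.eigenvalues_nonneg _) (Ne.symm ?_)
  have h1 := hA.rank_eq_card_non_zero_eigs
  rw [Matrix.rank_transpose_mul_self, hY] at h1
  intro hc
  have := Fintype.card_subtype_lt (p := fun i => hA.eigenvalues i ≠ 0) (x := _) (not_not.2 hc)
  rw [← h1] at this
  simp at this

lemma aux_psd_mul {m n : ℕ} (P : Matrix (Fin n) (Fin n) ℝ) (hP : P.PosSemidef)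
    (θ : Matrix (Fin m) (Fin n) ℝ) : 0 ≤ (P * (θᵀ * θ)).trace := by
  have := (hP.mul_mul_conjTranspose_same θ).trace_nonneg
  rw [Matrix.conjTranspose_eq_transpose_of_trivial, Matrix.mul_assoc, Matrix.trace_mul_comm,
    Matrix.mul_assoc] at this
  exact this

lemma aux_core {p r : ℕ} (Z θ : Matrix (Fin p) (Fin r) ℝ)
    (hP : (Zᵀ * (Z + θ)).PosSemidef) (s : ℝ)
    (hs : (Zᵀ * Z - s • (1 : Matrix (Fin r) (Fin r) ℝ)).PosSemidef)
    (M : Matrix (Fin p) (Fin p) ℝ) (hM : M = (Z + θ) * (Z + θ)ᵀ - Z * Zᵀ) :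
    ((θ * θᵀ) * (θ * θᵀ)).trace ≤ 2 * (M * M).trace ∧
    2 * (Real.sqrt 2 - 1) * s * (θᵀ * θ).trace ≤ (M * M).trace := by
  have hM' : M = Z * θᵀ + θ * Zᵀ + θ * θᵀ := by
    rw [hM, Matrix.transpose_add]; simp only [Matrix.add_mul, Matrix.mul_add]; abel
  have hPs : θᵀ * Z = Zᵀ * θ := by
    have h1 := hP.1
    unfold Matrix.IsHermitian at h1
    rw [Matrix.conjTranspose_eq_transpose_of_trivial] at h1
    simp only [Matrix.transpose_mul, Matrix.transpose_add, Matrix.transpose_transpose, Matrix.mul_add,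
      Matrix.add_mul] at h1
    exact add_left_cancel h1
  have hCt : (Zᵀ * θ)ᵀ = Zᵀ * θ := by
    rw [Matrix.transpose_mul, Matrix.transpose_transpose, hPs]
  have hBt : (θᵀ * θ)ᵀ = θᵀ * θ := by
    rw [Matrix.transpose_mul, Matrix.transpose_transpose]
  have hPB := aux_psd_mul _ hP θ
  have hAB := aux_psd_mul _ hs θ
  have hT : ((θ * θᵀ) * (θ * θᵀ)).trace = ((θᵀ * θ) * (θᵀ * θ)).trace := aux_cyc _ _ _ _
  have hMM : (M * M).trace = 2 * ((Zᵀ * Z) * (θᵀ * θ)).trace + 2 * ((Zᵀ * θ) * (Zᵀ * θ)).trace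
      + 4 * ((Zᵀ * θ) * (θᵀ * θ)).trace + ((θᵀ * θ) * (θᵀ * θ)).trace := by
    rw [hM']
    simp only [Matrix.add_mul, Matrix.mul_add, Matrix.trace_add]
    rw [aux_cyc Z θᵀ Z θᵀ, aux_cyc θ Zᵀ Z θᵀ, aux_cyc θ θᵀ Z θᵀ, aux_cyc Z θᵀ θ Zᵀ,
      aux_cyc θ Zᵀ θ Zᵀ, aux_cyc θ θᵀ θ Zᵀ, aux_cyc Z θᵀ θ θᵀ, aux_cyc θ Zᵀ θ θᵀ,
      aux_cyc θ θᵀ θ θᵀ, hPs]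
    rw [Matrix.trace_mul_comm (θᵀ * θ) (Zᵀ * Z), Matrix.trace_mul_comm (θᵀ * θ) (Zᵀ * θ)]
    ring
  rw [hT, hMM]
  rw [Matrix.mul_add, Matrix.add_mul, Matrix.trace_add] at hPB
  rw [Matrix.sub_mul, Matrix.smul_mul, one_mul, Matrix.trace_sub, Matrix.trace_smul, smul_eq_mul] at hAB
  have hq : ∀ x : ℝ, 0 ≤ ((θᵀ * θ) * (θᵀ * θ)).trace + 2 * x * ((Zᵀ * θ) * (θᵀ * θ)).trace
      + x ^ 2 * ((Zᵀ * θ) * (Zᵀ * θ)).trace := by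
    intro x
    have h1 := aux_sq_nonneg (θᵀ * θ + x • (Zᵀ * θ))
    rw [Matrix.transpose_add, Matrix.transpose_smul, hCt, hBt] at h1
    simp only [Matrix.add_mul, Matrix.mul_add, Matrix.trace_add, Matrix.smul_mul, Matrix.mul_smul,
      Matrix.trace_smul, smul_eq_mul] at h1
    rw [Matrix.trace_mul_comm (θᵀ * θ) (Zᵀ * θ)] at h1
    linarith
  have hB0 : 0 ≤ (θᵀ * θ).trace := aux_sq_nonneg θ
  generalize ((θᵀ * θ) * (θᵀ * θ)).trace = b2 at *
  generalize ((Zᵀ * θ) * (θᵀ * θ)).trace = cb at *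
  generalize ((Zᵀ * θ) * (Zᵀ * θ)).trace = c2 at *
  generalize ((Zᵀ * Z) * (θᵀ * θ)).trace = ab at *
  generalize (θᵀ * θ).trace = b at *
  have h2 := Real.sq_sqrt (show (0 : ℝ) ≤ 2 by norm_num)
  constructor
  · have := hq 2
    linarith
  · have h3 := hq (Real.sqrt 2)
    rw [h2] at h3
    have h4 : 1 ≤ Real.sqrt 2 := Real.one_le_sqrt.2 (by norm_num)
    have h5 : Real.sqrt 2 ≤ 2 := by
      rw [Real.sqrt_le_left (by norm_num)]; norm_num
    have h6 : 0 ≤ (Real.sqrt 2 - 1) * (ab - s * b) := mul_nonneg (by linarith) hAB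
    have h7 : 0 ≤ (2 - Real.sqrt 2) * (ab + cb) := mul_nonneg (by linarith) hPB
    linarith

/-- region with negative curvature for `H`: at points far from `Ystar` with
small gradient of `H`, the lifted Hessian quadratic form of `H` along `θ = Y - Ystar Q` is at
most `(α - 2(√2-1)) σ_r(Ystar)² ‖θ‖²`; in particular it is negative when `α < 2(√2-1)`. -/
theorem stmt9 {p r : ℕ} (Ystar : Matrix (Fin p) (Fin r) ℝ) (hYs : Ystar.rank = r)
    (X : Matrix (Fin p) (Fin p) ℝ) (hX : X = Ystar * Ystarᵀ)
    (κ : ℝ) (hκ : κ = sval Ystar 1 / sval Ystar r)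
    (μ α : ℝ) (hμ0 : 0 ≤ μ) (hα0 : 0 ≤ α)
    (Y : Matrix (Fin p) (Fin r) ℝ) (hY : Y.rank = r)
    (hd : dOrth Y Ystar > μ * sval Ystar r / κ)
    (hgrad : frob ((2 : ℝ) • ((Y * Yᵀ - X) * Y)) ≤ α * μ * (sval Ystar r) ^ 3 / (4 * κ))
    (Q : Matrix (Fin r) (Fin r) ℝ) (hQ : IsOrtho Q)
    (hQmin : ∀ O : Matrix (Fin r) (Fin r) ℝ, IsOrtho O →
      frob (Y - Ystar * Q) ≤ frob (Y - Ystar * O))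
    (θ : Matrix (Fin p) (Fin r) ℝ) (hθ : θ = Y - Ystar * Q) :
    (frob (Y * θᵀ + θ * Yᵀ)) ^ 2 + 2 * trInner (Y * Yᵀ - X) (θ * θᵀ) ≤
      (α - 2 * (Real.sqrt 2 - 1)) * (sval Ystar r) ^ 2 * (frob θ) ^ 2 ∧
    (α < 2 * (Real.sqrt 2 - 1) →
      (frob (Y * θᵀ + θ * Yᵀ)) ^ 2 + 2 * trInner (Y * Yᵀ - X) (θ * θᵀ) < 0) := by
  have hdle : dOrth Y Ystar ≤ frob θ := by
    apply csInf_le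
    · exact ⟨0, by rintro c ⟨O, -, rfl⟩; exact aux_frob_nonneg _⟩
    · refine ⟨Q, hQ, ?_⟩
      rw [hθ]
      unfold frob
      congr 1
      refine Finset.sum_congr rfl fun i _ => Finset.sum_congr rfl fun j _ => ?_
      simp only [Matrix.sub_apply]; ring
  have hQ' : Q * Qᵀ = 1 := mul_eq_one_comm.1 hQ
  set Z := Ystar * Q with hZ
  have hXZ : X = Z * Zᵀ := by
    rw [hX, hZ, Matrix.transpose_mul, Matrix.mul_assoc, ← Matrix.mul_assoc Q, hQ', Matrix.one_mul]
  have hYZ : Y = Z + θ := by rw [hθ]; abel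
  have hP : (Zᵀ * Y).PosSemidef := by
    apply aux_procrustes
    intro O hO
    have hO' : O * Oᵀ = 1 := mul_eq_one_comm.1 hO
    have hQO : IsOrtho (Q * O) := by
      unfold IsOrtho at *
      rw [Matrix.transpose_mul, Matrix.mul_assoc, ← Matrix.mul_assoc Qᵀ, hQ, Matrix.one_mul, hO]
    have h1 := hQmin _ hQO
    rw [← Matrix.mul_assoc, ← hZ] at h1
    have h2 := pow_le_pow_left₀ (aux_frob_nonneg _) h1 2
    rw [aux_frob_sq, aux_frob_sq] at h2
    simp only [Matrix.transpose_sub, Matrix.transpose_mul, Matrix.sub_mul, Matrix.mul_sub, Matrix.trace_sub] at h2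
    have e1 : (Oᵀ * Zᵀ * (Z * O)).trace = (Zᵀ * Z).trace := by
      rw [aux_cyc]
      rw [Matrix.trace_mul_comm, ← Matrix.trace_mul_comm (O * Oᵀ), hO', Matrix.one_mul]
    have e2 : (Yᵀ * (Z * O)).trace = (Oᵀ * Zᵀ * Y).trace := by
      rw [← Matrix.trace_transpose]; simp [Matrix.mul_assoc]
    have e3 : (Yᵀ * Z).trace = (Zᵀ * Y).trace := by
      rw [← Matrix.trace_transpose]; simp
    rw [← Matrix.mul_assoc]
    rw [e1, e2, e3] at h2
    linarith
  have hs : (Zᵀ * Z - ((sval Ystar r) ^ 2) • (1 : Matrix (Fin r) (Fin r) ℝ)).PosSemidef := by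
    have h1 := (aux_eig Ystar).conjTranspose_mul_mul_same Q
    rw [Matrix.conjTranspose_eq_transpose_of_trivial, Matrix.mul_sub, Matrix.sub_mul, Matrix.mul_smul,
      Matrix.smul_mul, mul_one, (show Qᵀ * Q = 1 from hQ)] at h1
    rw [hZ, Matrix.transpose_mul]
    simpa only [Matrix.mul_assoc] using h1
  obtain ⟨M, hM⟩ : ∃ M, M = Y * Yᵀ - X := ⟨_, rfl⟩
  obtain ⟨hc1, hc2⟩ := aux_core Z θ (by rw [← hYZ]; exact hP) _ hs M (by rw [← hYZ, ← hXZ, hM])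
  rw [← hM] at hgrad ⊢
  have hMt : Mᵀ = M := by
    rw [hM, hXZ]; simp
  have hS : Y * θᵀ + θ * Yᵀ = M + θ * θᵀ := by
    rw [hM, hXZ, hYZ, Matrix.transpose_add]; simp only [Matrix.add_mul, Matrix.mul_add]; abel
  have hTt : (θ * θᵀ)ᵀ = θ * θᵀ := by simp
  have hg : (M * (M + θ * θᵀ)).trace = (((2 : ℝ) • (M * Y))ᵀ * θ).trace := by
    rw [← hS, Matrix.mul_add, Matrix.trace_add, Matrix.transpose_smul, Matrix.smul_mul, Matrix.trace_smul,
      Matrix.transpose_mul, hMt, smul_eq_mul]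
    have e1 : (M * (Y * θᵀ)).trace = (Yᵀ * M * θ).trace := by
      rw [← Matrix.trace_transpose]
      simp only [Matrix.transpose_mul, Matrix.transpose_transpose, hMt]
      rw [Matrix.mul_assoc, Matrix.trace_mul_comm]
    have e2 : (M * (θ * Yᵀ)).trace = (Yᵀ * M * θ).trace := by
      rw [← Matrix.mul_assoc, Matrix.trace_mul_comm, ← Matrix.mul_assoc]
    rw [e1, e2]; ring
  have hgle : (M * (M + θ * θᵀ)).trace ≤ frob ((2 : ℝ) • (M * Y)) * frob θ := by
    rw [hg]; exact aux_cs _ _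
  have hgn : frob ((2 : ℝ) • (M * Y)) ≤ α * (sval Ystar r) ^ 2 / 4 * frob θ := by
    refine hgrad.trans ?_
    have e : α * μ * sval Ystar r ^ 3 / (4 * κ)
      = α * (sval Ystar r) ^ 2 / 4 * (μ * sval Ystar r / κ) := by
      rw [mul_comm 4 κ, ← div_div]; ring
    rw [e]
    apply mul_le_mul_of_nonneg_left (hd.le.trans hdle) (by positivity)
  have hgf : (M * (M + θ * θᵀ)).trace ≤ α * (sval Ystar r) ^ 2 / 4 * (frob θ) ^ 2 := by
    refine hgle.trans ((mul_le_mul_of_nonneg_right hgn (aux_frob_nonneg θ)).trans (le_of_eq ?_))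
    ring
  have main : (frob (Y * θᵀ + θ * Yᵀ)) ^ 2 + 2 * trInner M (θ * θᵀ) ≤
      (α - 2 * (Real.sqrt 2 - 1)) * (sval Ystar r) ^ 2 * (frob θ) ^ 2 := by
    rw [hS, aux_frob_sq, aux_trInner, Matrix.transpose_add, hMt, hTt]
    rw [← aux_frob_sq] at hc2
    simp only [Matrix.add_mul, Matrix.mul_add, Matrix.trace_add] at hgf ⊢
    rw [Matrix.trace_mul_comm (θ * θᵀ) M]
    linarith
  refine ⟨main, fun hα => lt_of_le_of_lt main ?_⟩
  have hκ0 : 0 ≤ κ := by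
    rw [hκ]; exact div_nonneg (Real.sqrt_nonneg _) (Real.sqrt_nonneg _)
  have hσ0 : 0 ≤ sval Ystar r := Real.sqrt_nonneg _
  have hθ0 : 0 < frob θ := by
    have : 0 ≤ μ * sval Ystar r / κ := by positivity
    linarith
  have hr : 0 < r := by
    rcases Nat.eq_zero_or_pos r with h0 | h0
    · subst h0
      simp [frob] at hθ0
    · exact h0
  have hσ := aux_pos hr Ystar hYs
  have : 0 < (2 * (Real.sqrt 2 - 1) - α) * ((sval Ystar r) ^ 2 * (frob θ) ^ 2) :=
    mul_pos (by linarith) (by positivity)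
  linarith
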